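/- arXiv:1902.03060 — 3 statements merged into one kernel-verified Lean document; each statement's English description precedes it below -/
import Mathlib

section
/- The following conditions are equivalent: (1) H(Σ) is finite dimensional; (2) H(Π) is finite dimensional; (3) ker P̂ i = ran Q̂ i for all but finitely many i ∈ ι. In that case dim H(Π) = dim H(Σ) = ∑_{i∈ι} dim(ker P̂ i / ran Q̂ i). -/
noncomputable section

open Submodule

variable {ι : Type*}

/-- The submodule of finitely supported families in a product of `ℂ`-modules. -/
def finSupp (F : ι → Type*) [∀ i, AddCommGroup (F i)] [∀ i, Module ℂ (F i)] :
    Submodule ℂ (∀ i, F i) where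
  carrier := {a | {i | a i ≠ 0}.Finite}
  zero_mem' := by
    simp
  add_mem' := by
    intro a b ha hb
    refine (ha.union hb).subset fun i hi => ?_
    simp only [Set.mem_setOf_eq, Set.mem_union] at hi ⊢
    by_contra h
    push_neg at h
    exact hi (by simp [h.1, h.2])
  smul_mem' := by
    intro c a ha
    refine ha.subset fun i hi => ?_
    simp only [Set.mem_setOf_eq] at hi ⊢
    intro h
    exact hi (by simp [h])

/-- The componentwise linear map induced by a family of linear maps. -/
def pwMap {F G : ι → Type*} [∀ i, AddCommGroup (F i)] [∀ i, Module ℂ (F i)]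
    [∀ i, AddCommGroup (G i)] [∀ i, Module ℂ (G i)]
    (T : ∀ i, F i →ₗ[ℂ] G i) : (∀ i, F i) →ₗ[ℂ] (∀ i, G i) where
  toFun u i := T i (u i)
  map_add' u v := by funext i; simp
  map_smul' c u := by funext i; simp

@[simp] theorem pwMap_apply {F G : ι → Type*} [∀ i, AddCommGroup (F i)] [∀ i, Module ℂ (F i)]
    [∀ i, AddCommGroup (G i)] [∀ i, Module ℂ (G i)]
    (T : ∀ i, F i →ₗ[ℂ] G i) (u : ∀ i, F i) (i : ι) : pwMap T u i = T i (u i) := rfl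

/-- The `k`-th power `V^k` of a subspace `V ⊆ Π`, inside `∏ i, (E i)^k`. -/
def Vpow {E : ι → Type*} [∀ i, AddCommGroup (E i)] [∀ i, Module ℂ (E i)]
    (V : Submodule ℂ (∀ i, E i)) (k : ℕ) : Submodule ℂ (∀ i, Fin k → E i) where
  carrier := {u | ∀ j : Fin k, (fun i => u i j) ∈ V}
  zero_mem' := fun _ => V.zero_mem
  add_mem' := fun ha hb j => V.add_mem (ha j) (hb j)
  smul_mem' := fun c _a ha j => V.smul_mem c (ha j)

theorem Vpow_mono {E : ι → Type*} [∀ i, AddCommGroup (E i)] [∀ i, Module ℂ (E i)]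
    {V W : Submodule ℂ (∀ i, E i)} (h : V ≤ W) (k : ℕ) : Vpow V k ≤ Vpow W k :=
  fun _ hu j => h (hu j)

section Coh

variable {E : ι → Type*} [∀ i, AddCommGroup (E i)] [∀ i, Module ℂ (E i)] {r m n : ℕ}

/-- The local cohomology space `ker P̂ i / ran Q̂ i`. -/
abbrev locCoh (Qh : ∀ i, (Fin r → E i) →ₗ[ℂ] (Fin m → E i))
    (Ph : ∀ i, (Fin m → E i) →ₗ[ℂ] (Fin n → E i)) (i : ι) : Type _ :=
  ↥(LinearMap.ker (Ph i)) ⧸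
    ((LinearMap.range (Qh i)).comap (LinearMap.ker (Ph i)).subtype)

/-- `ker (P : V^m → V^n)` as a submodule of `Π^m`. -/
abbrev cohKer (Ph : ∀ i, (Fin m → E i) →ₗ[ℂ] (Fin n → E i))
    (V : Submodule ℂ (∀ i, E i)) : Submodule ℂ (∀ i, Fin m → E i) :=
  Vpow V m ⊓ LinearMap.ker (pwMap Ph)

/-- `ran (Q : V^r → V^m)` as a submodule of `Π^m`. -/
abbrev cohRan (Qh : ∀ i, (Fin r → E i) →ₗ[ℂ] (Fin m → E i))
    (V : Submodule ℂ (∀ i, E i)) : Submodule ℂ (∀ i, Fin m → E i) :=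
  (Vpow V r).map (pwMap Qh)

/-- The cohomology `H(V) = ker (P : V^m → V^n) / ran (Q : V^r → V^m)`. -/
abbrev coh (Qh : ∀ i, (Fin r → E i) →ₗ[ℂ] (Fin m → E i))
    (Ph : ∀ i, (Fin m → E i) →ₗ[ℂ] (Fin n → E i))
    (V : Submodule ℂ (∀ i, E i)) : Type _ :=
  ↥(cohKer Ph V) ⧸ ((cohRan Qh V).comap (cohKer Ph V).subtype)

theorem kerMem (Ph : ∀ i, (Fin m → E i) →ₗ[ℂ] (Fin n → E i))
    {V : Submodule ℂ (∀ i, E i)} (a : ↥(cohKer Ph V)) (i : ι) :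
    (a : ∀ j, Fin m → E j) i ∈ LinearMap.ker (Ph i) := by
  have h : pwMap Ph (a : ∀ j, Fin m → E j) = 0 :=
    LinearMap.mem_ker.mp (Submodule.mem_inf.mp a.2).2
  exact LinearMap.mem_ker.mpr (by simpa using congrFun h i)

/-- The map `H(V) → H(W)` induced by an inclusion `V ⊆ W`. -/
def cohMap (Qh : ∀ i, (Fin r → E i) →ₗ[ℂ] (Fin m → E i))
    (Ph : ∀ i, (Fin m → E i) →ₗ[ℂ] (Fin n → E i))
    {V W : Submodule ℂ (∀ i, E i)} (h : V ≤ W) :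
    coh Qh Ph V →ₗ[ℂ] coh Qh Ph W :=
  Submodule.mapQ _ _ (Submodule.inclusion (inf_le_inf_right _ (Vpow_mono h m)))
    (by
      intro x hx
      simp only [Submodule.mem_comap] at hx ⊢
      exact Submodule.map_mono (Vpow_mono h r) hx)

end Coh

/-!
Evaluating a cocycle at every index induces `H(V) → ∏ i, ker P̂ i / ran Q̂ i`. Both for `V = Π` and
for `V = Σ` this map is injective, because preimages under the `Q̂ i` can be chosen index by index,
and to be `0` wherever the cocycle vanishes. Its image contains all finitely supported families. A
subspace of a product of finite-dimensional spaces which contains these is finite-dimensional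
exactly when only finitely many factors are nonzero, and then it is the whole product.
-/

section Product

variable {R : Type*} [Semiring R] {M : ι → Type*} [∀ i, AddCommMonoid (M i)] [∀ i, Module R (M i)]

/-- Restriction to the indices with nontrivial factors, as a linear equivalence of products. It
reduces products with finitely many nontrivial factors to finite products. -/
def piNontrivialEquiv : (∀ i, M i) ≃ₗ[R] ∀ i : {i | Nontrivial (M i)}, M i :=
  LinearEquiv.ofBijective
    (LinearMap.pi fun i : {i | Nontrivial (M i)} => LinearMap.proj (i : ι)) <| by
      refine ⟨fun x y hxy => funext fun i => ?_, Subtype.surjective_restrict _⟩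
      by_cases hi : Nontrivial (M i)
      · exact congrFun hxy ⟨i, hi⟩
      · exact (not_nontrivial_iff_subsingleton.mp hi).elim _ _

theorem module_finite_pi_of_finite_nontrivial [∀ i, Module.Finite R (M i)]
    (hM : {i | Nontrivial (M i)}.Finite) : Module.Finite R (∀ i, M i) :=
  have := hM.to_subtype
  Module.Finite.equiv piNontrivialEquiv.symm

theorem finrank_pi_eq_finsum [StrongRankCondition R] [∀ i, Module.Free R (M i)]
    [∀ i, Module.Finite R (M i)] (hM : {i | Nontrivial (M i)}.Finite) :
    Module.finrank R (∀ i, M i) = ∑ᶠ i, Module.finrank R (M i) := by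
  have := hM.fintype
  have := nontrivial_of_invariantBasisNumber R
  have hsupp : Function.support (fun i => Module.finrank R (M i)) ⊆ {i | Nontrivial (M i)} :=
    fun i hi => not_subsingleton_iff_nontrivial.mp fun _ => hi Module.finrank_zero_of_subsingleton
  calc Module.finrank R (∀ i, M i)
      = Module.finrank R (∀ i : {i | Nontrivial (M i)}, M i) := piNontrivialEquiv.finrank_eq
    _ = ∑ i : {i | Nontrivial (M i)}, Module.finrank R (M i) := Module.finrank_pi_fintype R
    _ = ∑ i ∈ {i | Nontrivial (M i)}.toFinset, Module.finrank R (M i) := by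
        exact Finset.sum_set_coe (f := fun i => Module.finrank R (M i)) _
    _ = ∑ᶠ i, Module.finrank R (M i) :=
        (finsum_eq_sum_of_support_subset _ (by rwa [Set.coe_toFinset])).symm

end Product

section FinSupp

variable {M N : ι → Type*} [∀ i, AddCommGroup (M i)] [∀ i, Module ℂ (M i)]
  [∀ i, AddCommGroup (N i)] [∀ i, Module ℂ (N i)]

theorem single_mem_finSupp [DecidableEq ι] (i : ι) (x : M i) : Pi.single i x ∈ finSupp M :=
  (Set.finite_singleton i).subset fun _ hj => by_contra fun hne => hj (Pi.single_eq_of_ne hne x)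

theorem mem_finSupp_of_imp {a : ∀ i, M i} {b : ∀ i, N i} (ha : a ∈ finSupp M)
    (hab : ∀ i, a i = 0 → b i = 0) : b ∈ finSupp N :=
  Set.Finite.subset ha fun i => mt (hab i)

theorem finSupp_eq_top (hM : {i | Nontrivial (M i)}.Finite) : finSupp M = ⊤ :=
  eq_top_iff.mpr fun a _ => hM.subset fun i hi => ⟨a i, 0, hi⟩

theorem finite_nontrivial_of_finSupp_le {W : Submodule ℂ (∀ i, M i)} [FiniteDimensional ℂ W]
    (hW : finSupp M ≤ W) : {i | Nontrivial (M i)}.Finite := by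
  classical
  let b i := Module.Basis.ofVectorSpace ℂ (M i)
  let v : (Σ i, Module.Basis.ofVectorSpaceIndex ℂ (M i)) → W :=
    fun p => ⟨Pi.single p.1 (b p.1 p.2), hW (single_mem_finSupp _ _)⟩
  have hv : LinearIndependent ℂ v :=
    .of_comp W.subtype <|
      Pi.linearIndependent_single (fun i => b i) fun i => (b i).linearIndependent
  have := hv.finite
  refine (Set.finite_range (Sigma.fst : (Σ i, Module.Basis.ofVectorSpaceIndex ℂ (M i)) → ι)).subset
    fun i (_ : Nontrivial (M i)) => ?_
  obtain ⟨j⟩ := (b i).index_nonempty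
  exact ⟨⟨i, j⟩, rfl⟩

theorem finiteDimensional_iff_of_finSupp_le [∀ i, FiniteDimensional ℂ (M i)]
    {W : Submodule ℂ (∀ i, M i)} (hW : finSupp M ≤ W) :
    FiniteDimensional ℂ W ↔ {i | Nontrivial (M i)}.Finite := by
  refine ⟨fun _ => finite_nontrivial_of_finSupp_le hW, fun hM => ?_⟩
  have : FiniteDimensional ℂ (∀ i, M i) := module_finite_pi_of_finite_nontrivial hM
  infer_instance

theorem finrank_eq_finsum_of_finSupp_le [∀ i, FiniteDimensional ℂ (M i)]
    {W : Submodule ℂ (∀ i, M i)} (hW : finSupp M ≤ W) (hM : {i | Nontrivial (M i)}.Finite) :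
    Module.finrank ℂ W = ∑ᶠ i, Module.finrank ℂ (M i) := by
  have hW_top : W = ⊤ := top_le_iff.mp (finSupp_eq_top hM ▸ hW)
  rw [hW_top, finrank_top, finrank_pi_eq_finsum hM]

theorem exists_mem_finSupp_pwMap_eq (T : ∀ i, M i →ₗ[ℂ] N i) {a : ∀ i, N i} (ha : a ∈ finSupp N)
    (haT : ∀ i, a i ∈ LinearMap.range (T i)) : ∃ u ∈ finSupp M, pwMap T u = a := by
  have hpre (i : ι) : ∃ x, T i x = a i ∧ (a i = 0 → x = 0) := by
    by_cases hai : a i = 0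
    · exact ⟨0, by rw [map_zero, hai], fun _ => rfl⟩
    · exact (haT i).imp fun x hx => ⟨hx, fun h => absurd h hai⟩
  choose u hu hu_zero using hpre
  exact ⟨u, mem_finSupp_of_imp ha hu_zero, funext hu⟩

theorem Vpow_finSupp (k : ℕ) : Vpow (finSupp M) k = finSupp fun i => Fin k → M i := by
  ext u
  refine ⟨fun hu => ?_, fun hu j => mem_finSupp_of_imp hu fun i hi => congrFun hi j⟩
  refine (Set.finite_iUnion hu).subset fun i hi => Set.mem_iUnion.mpr ?_
  exact Function.ne_iff.mp hi

end FinSupp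

section Evaluation

variable {E : ι → Type*} [∀ i, AddCommGroup (E i)] [∀ i, Module ℂ (E i)] {r m n : ℕ}
  (Qh : ∀ i, (Fin r → E i) →ₗ[ℂ] (Fin m → E i)) (Ph : ∀ i, (Fin m → E i) →ₗ[ℂ] (Fin n → E i))

theorem nontrivial_locCoh_iff {i : ι} (hPQ : (Ph i).comp (Qh i) = 0) :
    Nontrivial (locCoh Qh Ph i) ↔ LinearMap.ker (Ph i) ≠ LinearMap.range (Qh i) := by
  rw [Submodule.Quotient.nontrivial_iff, Ne, Submodule.comap_subtype_eq_top, not_iff_not]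
  exact ⟨fun h => h.antisymm (LinearMap.range_le_ker_iff.mpr hPQ), fun h => h.le⟩

/-- Evaluation of cohomology classes at the index `i`, the `i`-th component of `cohToPi`. -/
def cohEval (V : Submodule ℂ (∀ i, E i)) (i : ι) : coh Qh Ph V →ₗ[ℂ] locCoh Qh Ph i :=
  Submodule.mapQ _ _
    (LinearMap.codRestrict (LinearMap.ker (Ph i)) (LinearMap.proj i ∘ₗ (cohKer Ph V).subtype)
      fun a => kerMem Ph a i)
    (by
      rintro a ⟨u, -, hu⟩
      exact ⟨u i, congrFun hu i⟩)

/-- The comparison map from the cohomology of `V` to the product of the local cohomology spaces,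
through which the dimension of the former is computed. -/
def cohToPi (V : Submodule ℂ (∀ i, E i)) : coh Qh Ph V →ₗ[ℂ] ∀ i, locCoh Qh Ph i :=
  LinearMap.pi (cohEval Qh Ph V)

variable {Qh Ph} {V : Submodule ℂ (∀ i, E i)}

theorem cohToPi_mk_eq_zero_iff {a : cohKer Ph V} :
    cohToPi Qh Ph V (Submodule.Quotient.mk a) = 0 ↔ ∀ i, a.1 i ∈ LinearMap.range (Qh i) :=
  funext_iff.trans <| forall_congr' fun _ => Submodule.Quotient.mk_eq_zero _

theorem cohToPi_injective
    (hV : ∀ a ∈ Vpow V m, (∀ i, a i ∈ LinearMap.range (Qh i)) → a ∈ cohRan Qh V) :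
    Function.Injective (cohToPi Qh Ph V) := by
  refine (injective_iff_map_eq_zero _).mpr fun c hc => ?_
  obtain ⟨a, rfl⟩ := Submodule.Quotient.mk_surjective _ c
  exact (Submodule.Quotient.mk_eq_zero _).mpr
    (hV a a.2.1 (cohToPi_mk_eq_zero_iff.mp hc))

theorem cohToPi_top_injective : Function.Injective (cohToPi Qh Ph ⊤) := by
  refine cohToPi_injective fun a _ ha => ?_
  choose u hu using ha
  exact ⟨u, fun _ => Submodule.mem_top, funext hu⟩

theorem cohToPi_finSupp_injective : Function.Injective (cohToPi Qh Ph (finSupp E)) := by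
  refine cohToPi_injective fun a ha ha_range => ?_
  rw [Vpow_finSupp] at ha
  rw [cohRan, Vpow_finSupp]
  exact exists_mem_finSupp_pwMap_eq Qh ha ha_range

theorem finSupp_le_range_cohToPi (hV : finSupp E ≤ V) :
    finSupp (locCoh Qh Ph) ≤ LinearMap.range (cohToPi Qh Ph V) := by
  intro y hy
  obtain ⟨z, hz, rfl⟩ := exists_mem_finSupp_pwMap_eq
    (fun i => Submodule.mkQ ((LinearMap.range (Qh i)).comap (LinearMap.ker (Ph i)).subtype)) hy
    fun i => Submodule.mkQ_surjective _ (y i)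
  have hz_Vpow : (fun i => (z i : Fin m → E i)) ∈ Vpow V m := by
    refine Vpow_mono hV m ?_
    rw [Vpow_finSupp]
    exact mem_finSupp_of_imp hz fun i hi => congrArg Subtype.val hi
  have hz_ker : pwMap Ph (fun i => (z i : Fin m → E i)) = 0 := funext fun i => (z i).2
  exact ⟨Submodule.Quotient.mk ⟨_, hz_Vpow, hz_ker⟩, rfl⟩

theorem finiteDimensional_coh_iff [∀ i, FiniteDimensional ℂ (locCoh Qh Ph i)]
    (hV : finSupp E ≤ V) (hinj : Function.Injective (cohToPi Qh Ph V)) :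
    FiniteDimensional ℂ (coh Qh Ph V) ↔ {i | Nontrivial (locCoh Qh Ph i)}.Finite :=
  (Module.Finite.equiv_iff (LinearEquiv.ofInjective _ hinj)).trans
    (finiteDimensional_iff_of_finSupp_le (finSupp_le_range_cohToPi hV))

theorem finrank_coh_eq_finsum [∀ i, FiniteDimensional ℂ (locCoh Qh Ph i)]
    (hV : finSupp E ≤ V) (hinj : Function.Injective (cohToPi Qh Ph V))
    (hfin : {i | Nontrivial (locCoh Qh Ph i)}.Finite) :
    Module.finrank ℂ (coh Qh Ph V) = ∑ᶠ i, Module.finrank ℂ (locCoh Qh Ph i) := by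
  have hW := finSupp_le_range_cohToPi (Qh := Qh) (Ph := Ph) hV
  rw [← LinearMap.finrank_range_of_inj hinj, finrank_eq_finsum_of_finSupp_le hW hfin]

end Evaluation

theorem statement_2_general {ι : Type*} (E : ι → Type*)
    [∀ i, AddCommGroup (E i)] [∀ i, Module ℂ (E i)] (r m n : ℕ)
    (Qh : ∀ i, (Fin r → E i) →ₗ[ℂ] (Fin m → E i))
    (Ph : ∀ i, (Fin m → E i) →ₗ[ℂ] (Fin n → E i))
    [∀ i, FiniteDimensional ℂ (locCoh Qh Ph i)]
    (hPQ : ∀ i, (Ph i).comp (Qh i) = 0) :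
    ((FiniteDimensional ℂ (coh Qh Ph (finSupp E)) ↔
        FiniteDimensional ℂ (coh Qh Ph (⊤ : Submodule ℂ (∀ i, E i)))) ∧
      (FiniteDimensional ℂ (coh Qh Ph (finSupp E)) ↔
        {i | LinearMap.ker (Ph i) ≠ LinearMap.range (Qh i)}.Finite)) ∧
    (FiniteDimensional ℂ (coh Qh Ph (finSupp E)) →
      Module.finrank ℂ (coh Qh Ph (⊤ : Submodule ℂ (∀ i, E i))) =
          Module.finrank ℂ (coh Qh Ph (finSupp E)) ∧
        Module.finrank ℂ (coh Qh Ph (finSupp E)) =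
          ∑ᶠ i, Module.finrank ℂ (locCoh Qh Ph i)) := by
  have hsum := finiteDimensional_coh_iff (Qh := Qh) (Ph := Ph) le_rfl cohToPi_finSupp_injective
  have hprod := finiteDimensional_coh_iff (Qh := Qh) (Ph := Ph) le_top cohToPi_top_injective
  simp only [← nontrivial_locCoh_iff Qh Ph (hPQ _)]
  refine ⟨⟨hsum.trans hprod.symm, hsum⟩, fun hfd => ?_⟩
  have hfinrank := finrank_coh_eq_finsum le_rfl cohToPi_finSupp_injective (hsum.mp hfd)
  exact ⟨(finrank_coh_eq_finsum le_top cohToPi_top_injective (hsum.mp hfd)).trans hfinrank.symm,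
    hfinrank⟩

theorem statement_2 {ι : Type*} [Countable ι] (E : ι → Type*)
    [∀ i, NormedAddCommGroup (E i)] [∀ i, InnerProductSpace ℂ (E i)]
    [∀ i, FiniteDimensional ℂ (E i)] (r m n : ℕ)
    (Qh : ∀ i, (Fin r → E i) →ₗ[ℂ] (Fin m → E i))
    (Ph : ∀ i, (Fin m → E i) →ₗ[ℂ] (Fin n → E i))
    (hPQ : ∀ i, (Ph i).comp (Qh i) = 0) :
    ((FiniteDimensional ℂ (coh Qh Ph (finSupp E)) ↔
        FiniteDimensional ℂ (coh Qh Ph (⊤ : Submodule ℂ (∀ i, E i)))) ∧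
      (FiniteDimensional ℂ (coh Qh Ph (finSupp E)) ↔
        {i | LinearMap.ker (Ph i) ≠ LinearMap.range (Qh i)}.Finite)) ∧
    (FiniteDimensional ℂ (coh Qh Ph (finSupp E)) →
      Module.finrank ℂ (coh Qh Ph (⊤ : Submodule ℂ (∀ i, E i))) =
          Module.finrank ℂ (coh Qh Ph (finSupp E)) ∧
        Module.finrank ℂ (coh Qh Ph (finSupp E)) =
          ∑ᶠ i, Module.finrank ℂ (locCoh Qh Ph i)) :=
  statement_2_general E r m n Qh Ph hPQ
end
end

section
/- Let V ⊆ Π be a linear subspace with Σ ⊆ V, Q(V^r) ⊆ V^m and P(V^m) ⊆ V^n, and write ker Q = { v ∈ Π^r : Q̂ i(v(i)) = 0 for all i ∈ ι }. Assume Q satisfies the regularity condition: for every u ∈ Π^r with Q u ∈ V^m there exists v ∈ ker Q such that u − v ∈ V^r. Then the linear map H(V) → H(Π) induced by the inclusion V^m ↪ Π^m is injective. -/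
noncomputable section

open Submodule

variable {ι : Type*}

/-!
A class of `H(V)` dies in `H(W)` exactly when its representatives are of the form `Q u` with
`u ∈ W^r`, and it is already zero in `H(V)` exactly when `u` can be replaced by some `u' ∈ V^r` with
`Q u' = Q u`. Such a `u'` differs from `u` by an element of `ker Q`, so injectivity of
`H(V) → H(W)` is precisely the regularity condition on the cocycles of the form `Q u`.
-/

section LinearAlgebra

variable {R M N : Type*} [Ring R] [AddCommGroup M] [Module R M] [AddCommGroup N] [Module R N]

theorem mem_sup_iff_exists_sub_mem {p q : Submodule R M} {x : M} :
    x ∈ p ⊔ q ↔ ∃ y ∈ q, x - y ∈ p := by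
  rw [sup_comm, mem_sup]
  refine exists_congr fun y => and_congr_right fun _ => ⟨?_, fun hxy => ⟨x - y, hxy, by abel⟩⟩
  rintro ⟨z, hz, rfl⟩
  rwa [add_sub_cancel_left]

theorem inf_map_le_map_iff {f : M →ₗ[R] N} {s p : Submodule R M} {q : Submodule R N} :
    s.map f ⊓ q ≤ p.map f ↔ s ⊓ q.comap f ≤ p ⊔ LinearMap.ker f := by
  rw [← LinearMap.map_le_map_iff, map_inf_eq_map_inf_comap]

theorem mapQ_injective_iff {p : Submodule R M} {q : Submodule R N} {f : M →ₗ[R] N}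
    {h : p ≤ q.comap f} : Function.Injective (p.mapQ q f h) ↔ q.comap f ≤ p := by
  rw [← LinearMap.ker_eq_bot, ker_mapQ, ← LinearMap.le_ker_iff_map, ker_mkQ]

theorem mapQ_inclusion_injective_iff {K L A B : Submodule R M} {hKL : K ≤ L}
    {h : A.comap K.subtype ≤ (B.comap L.subtype).comap (inclusion hKL)} :
    Function.Injective (mapQ _ _ (inclusion hKL) h) ↔ K ⊓ B ≤ A := by
  rw [mapQ_injective_iff, ← comap_comp, subtype_comp_inclusion, ← map_le_iff_le_comap,
    map_comap_subtype]

end LinearAlgebra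

section Cohomology

variable {E : ι → Type*} [∀ i, AddCommGroup (E i)] [∀ i, Module ℂ (E i)] {r m n : ℕ}
  {Qh : ∀ i, (Fin r → E i) →ₗ[ℂ] (Fin m → E i)} {Ph : ∀ i, (Fin m → E i) →ₗ[ℂ] (Fin n → E i)}
  {V W : Submodule ℂ (∀ i, E i)}

theorem mem_ker_pwMap {F G : ι → Type*} [∀ i, AddCommGroup (F i)] [∀ i, Module ℂ (F i)]
    [∀ i, AddCommGroup (G i)] [∀ i, Module ℂ (G i)] {T : ∀ i, F i →ₗ[ℂ] G i} {u : ∀ i, F i} :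
    u ∈ LinearMap.ker (pwMap T) ↔ ∀ i, T i (u i) = 0 :=
  funext_iff

theorem cohMap_injective_iff (h : V ≤ W) :
    Function.Injective (cohMap Qh Ph h) ↔ cohRan Qh W ⊓ cohKer Ph V ≤ cohRan Qh V := by
  rw [cohMap, mapQ_inclusion_injective_iff, inf_comm]

theorem statement_5_general (h : V ≤ W) :
    Function.Injective (cohMap Qh Ph h) ↔
      ∀ u ∈ Vpow W r, pwMap Qh u ∈ cohKer Ph V →
        ∃ v : ∀ i, Fin r → E i, (∀ i, Qh i (v i) = 0) ∧ u - v ∈ Vpow V r := by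
  rw [cohMap_injective_iff, inf_map_le_map_iff]
  simp only [SetLike.le_def, mem_inf (p := Vpow W r), mem_comap, and_imp,
    mem_sup_iff_exists_sub_mem, mem_ker_pwMap]

end Cohomology

theorem statement_5 {ι : Type*} [Countable ι] (E : ι → Type*)
    [∀ i, NormedAddCommGroup (E i)] [∀ i, InnerProductSpace ℂ (E i)]
    [∀ i, FiniteDimensional ℂ (E i)] (r m n : ℕ)
    (Qh : ∀ i, (Fin r → E i) →ₗ[ℂ] (Fin m → E i))
    (Ph : ∀ i, (Fin m → E i) →ₗ[ℂ] (Fin n → E i))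
    (hPQ : ∀ i, (Ph i).comp (Qh i) = 0)
    (V : Submodule ℂ (∀ i, E i)) (hSigmaV : finSupp E ≤ V)
    (hQ : (Vpow V r).map (pwMap Qh) ≤ Vpow V m)
    (hP : (Vpow V m).map (pwMap Ph) ≤ Vpow V n)
    (hreg : ∀ u : ∀ i, Fin r → E i, pwMap Qh u ∈ Vpow V m →
      ∃ v : ∀ i, Fin r → E i, (∀ i, Qh i (v i) = 0) ∧ u - v ∈ Vpow V r) :
    Function.Injective (cohMap Qh Ph (le_top : V ≤ ⊤)) :=
  (statement_5_general le_top).mpr fun u _ hu => hreg u hu.1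
end
end

section
/- Assume condition S(ρ) holds for some ρ > 0, let V = D_{(ω)} (so Σ ⊆ V ⊆ Π), and assume Q(V^r) ⊆ V^m and P(V^m) ⊆ V^n. Then H(V) is finite dimensional if and only if both H(Σ) is finite dimensional and Q is almost V globally hypoelliptic, i.e., for every u ∈ Π^r with Q u ∈ V^m there exists v ∈ ker Q := { v ∈ Π^r : Q̂ i(v(i)) = 0 for all i } with u − v ∈ V^r. In that case dim H(V) = ∑_{i∈ι} dim(ker P̂ i / ran Q̂ i). -/
noncomputable section

open Submodule

variable {ι : Type*}

/-- `D_{(ω)} = ⋂_{t>0} D_{ω,t}` as a linear subspace of `Π = ∏ i, E i`. -/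
def DprojSub (E : ι → Type*) [∀ i, NormedAddCommGroup (E i)]
    [∀ i, InnerProductSpace ℂ (E i)] (ω : ι → ℝ) : Submodule ℂ (∀ i, E i) where
  carrier := {a | ∀ t > (0 : ℝ), Summable fun i => Real.exp (2 * t * ω i) * ‖a i‖ ^ 2}
  zero_mem' := by
    intro t ht
    simpa using summable_zero
  add_mem' := by
    intro a b ha hb t ht
    refine Summable.of_nonneg_of_le (fun i => by positivity) (fun i => ?_)
      (((ha t ht).mul_left 2).add ((hb t ht).mul_left 2))
    have h2 : ‖a i + b i‖ ^ 2 ≤ (‖a i‖ + ‖b i‖) ^ 2 :=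
      pow_le_pow_left₀ (norm_nonneg _) (norm_add_le _ _) 2
    have h3 : (‖a i‖ + ‖b i‖) ^ 2 ≤ 2 * ‖a i‖ ^ 2 + 2 * ‖b i‖ ^ 2 := by
      nlinarith [sq_nonneg (‖a i‖ - ‖b i‖)]
    calc Real.exp (2 * t * ω i) * ‖(a + b) i‖ ^ 2
        ≤ Real.exp (2 * t * ω i) * (2 * ‖a i‖ ^ 2 + 2 * ‖b i‖ ^ 2) := by
          refine mul_le_mul_of_nonneg_left ?_ (Real.exp_nonneg _)
          simpa using h2.trans h3
      _ = 2 * (Real.exp (2 * t * ω i) * ‖a i‖ ^ 2) +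
            2 * (Real.exp (2 * t * ω i) * ‖b i‖ ^ 2) := by ring
  smul_mem' := by
    intro c a ha t ht
    refine ((ha t ht).mul_left (‖c‖ ^ 2)).congr fun i => ?_
    simp only [Pi.smul_apply, norm_smul, mul_pow]
    ring

/-!
Sending a class to the classes of its components maps `H(V)` to `∏ i, ker P̂ i / ran Q̂ i`. For
`Σ ⊆ V` the image contains all finitely supported families, and the map is injective as soon as `Q`
is almost `V` globally hypoelliptic, which is always the case for `V = Σ`. A product whose finitely
supported part is finite dimensional coincides with that part, so it remains to see that `Q` is
almost `D_{(ω)}` globally hypoelliptic when `H(D_{(ω)})` is finite dimensional.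

Given `Q u ∈ D_{(ω)}^m`, replace each `u i` by an almost shortest `w i` in its class modulo
`ker Q̂ i`. If `w` were not in `D_{(ω)}^r`, then for some `t > 0` the series
`∑ e^{2tω(i)} ‖w i‖²` would diverge, and `ι` would contain infinitely many disjoint sets `A j` over
each of which it still diverges. The restrictions of `Q u` to the `A j` cannot be linearly
independent in `H(D_{(ω)})`, and a nontrivial relation provides some `j` and some `y ∈ D_{(ω)}^r`
with `Q y = Q u` on `A j`; as `w` is almost shortest, this makes the series converge over `A j`.
-/

section LinearAlgebra

theorem exists_sum_smul_mem_of_finite_quotient {K M κ : Type*} [DivisionRing K] [AddCommGroup M]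
    [Module K M] [Infinite κ] {p q : Submodule K M} [Module.Finite K (p ⧸ q.comap p.subtype)]
    {x : κ → M} (hx : ∀ j, x j ∈ p) :
    ∃ (s : Finset κ) (g : κ → K), ∑ j ∈ s, g j • x j ∈ q ∧ ∃ j ∈ s, g j ≠ 0 := by
  have hdep : ¬ LinearIndependent K fun j => (q.comap p.subtype).mkQ ⟨x j, hx j⟩ := fun h =>
    have := h.finite
    not_finite κ
  obtain ⟨s, g, hsum, hg⟩ := not_linearIndependent_iff.mp hdep
  simp only [← map_smul, ← map_sum] at hsum
  refine ⟨s, g, ?_, hg⟩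
  simpa using (Submodule.Quotient.mk_eq_zero _).mp hsum

variable {L : ι → Type*}

theorem finite_setOf_nontrivial_of_single_mem {K : Type*} [DivisionRing K] [DecidableEq ι]
    [∀ i, AddCommGroup (L i)] [∀ i, Module K (L i)] {W : Submodule K (∀ i, L i)}
    [Module.Finite K W] (hW : ∀ i x, Pi.single i x ∈ W) : {i | Nontrivial (L i)}.Finite := by
  let b := fun i => Module.Basis.ofVectorSpace K (L i)
  have hb : LinearIndependent K fun j : Σ i, Module.Basis.ofVectorSpaceIndex K (L i) =>
      (⟨Pi.single j.1 (b j.1 j.2), hW _ _⟩ : W) :=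
    .of_comp W.subtype (Pi.linearIndependent_single (fun i => b i) fun i => (b i).linearIndependent)
  have : Finite (Σ i, Module.Basis.ofVectorSpaceIndex K (L i)) := hb.finite
  refine (Set.finite_range fun j : Σ i, Module.Basis.ofVectorSpaceIndex K (L i) => j.1).subset
    fun i (_ : Nontrivial (L i)) => ?_
  obtain ⟨j⟩ := (b i).index_nonempty
  exact ⟨⟨i, j⟩, rfl⟩

theorem finrank_pi_eq_finsum_s18 (K : Type*) [Field K] [∀ i, AddCommGroup (L i)]
    [∀ i, Module K (L i)] [Module.Finite K (∀ i, L i)] :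
    Module.finrank K (∀ i, L i) = ∑ᶠ i, Module.finrank K (L i) := by
  classical
  have hfin : {i | Nontrivial (L i)}.Finite :=
    finite_setOf_nontrivial_of_single_mem (K := K) (W := ⊤) fun _ _ => Submodule.mem_top
  have hsub : ∀ i ∉ hfin.toFinset, Subsingleton (L i) := fun i hi =>
    not_nontrivial_iff_subsingleton.mp fun h => hi (hfin.mem_toFinset.mpr h)
  have hfd : ∀ i, Module.Finite K (L i) := fun i =>
    .of_surjective (LinearMap.proj i : (∀ i, L i) →ₗ[K] L i) (LinearMap.proj_surjective i)
  let restrict : (∀ i, L i) →ₗ[K] ∀ i : hfin.toFinset, L i :=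
    LinearMap.pi fun i => LinearMap.proj i.1
  have hbij : Function.Bijective restrict := by
    refine ⟨fun a b hab => funext fun i => ?_, fun c => ?_⟩
    · by_cases hi : i ∈ hfin.toFinset
      · exact congrFun hab ⟨i, hi⟩
      · exact (hsub i hi).elim _ _
    · exact ⟨fun i => if hi : i ∈ hfin.toFinset then c ⟨i, hi⟩ else 0,
        funext fun i => dif_pos i.2⟩
  have hsupp : (Function.support fun i => Module.finrank K (L i)) ⊆ hfin.toFinset := fun i hi => by
    by_contra hmem
    have := hsub i hmem
    exact hi Module.finrank_zero_of_subsingleton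
  rw [(LinearEquiv.ofBijective restrict hbij).finrank_eq, Module.finrank_pi_fintype,
    finsum_eq_sum_of_support_subset _ hsupp,
    Finset.sum_coe_sort hfin.toFinset fun i => Module.finrank K (L i)]

theorem finSupp_eq_top_of_finite [∀ i, AddCommGroup (L i)] [∀ i, Module ℂ (L i)]
    [Module.Finite ℂ (finSupp L)] : finSupp L = ⊤ := by
  classical
  have hfin : {i | Nontrivial (L i)}.Finite :=
    finite_setOf_nontrivial_of_single_mem (W := finSupp L) fun i x =>
      (Set.finite_singleton i).subset fun k hk => by_contra fun hne =>
        hk (Pi.single_eq_of_ne hne x)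
  exact eq_top_iff.mpr fun c _ => hfin.subset fun i hi => ⟨c i, 0, hi⟩

section FinSuppLeRange

variable {M : Type*} [AddCommGroup M] [Module ℂ M] [∀ i, AddCommGroup (L i)]
  [∀ i, Module ℂ (L i)] {f : M →ₗ[ℂ] ∀ i, L i}

theorem surjective_of_finSupp_le_range [Module.Finite ℂ M] (hle : finSupp L ≤ LinearMap.range f) :
    Function.Surjective f := by
  have : Module.Finite ℂ (finSupp L) := .of_injective _ (Submodule.inclusion_injective hle)
  exact LinearMap.range_eq_top.mp (top_le_iff.mp (finSupp_eq_top_of_finite.symm.trans_le hle))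

theorem finite_pi_of_finSupp_le_range [Module.Finite ℂ M] (hle : finSupp L ≤ LinearMap.range f) :
    Module.Finite ℂ (∀ i, L i) :=
  .of_surjective f (surjective_of_finSupp_le_range hle)

theorem finite_iff_finite_pi_of_finSupp_le_range (hf : Function.Injective f)
    (hle : finSupp L ≤ LinearMap.range f) : Module.Finite ℂ M ↔ Module.Finite ℂ (∀ i, L i) :=
  ⟨fun _ => finite_pi_of_finSupp_le_range hle, fun _ => .of_injective f hf⟩

theorem finrank_eq_finsum_of_finSupp_le_range [Module.Finite ℂ M] (hf : Function.Injective f)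
    (hle : finSupp L ≤ LinearMap.range f) :
    Module.finrank ℂ M = ∑ᶠ i, Module.finrank ℂ (L i) := by
  have := finite_pi_of_finSupp_le_range hle
  rw [(LinearEquiv.ofBijective f ⟨hf, surjective_of_finSupp_le_range hle⟩).finrank_eq,
    finrank_pi_eq_finsum_s18]

end FinSuppLeRange

end LinearAlgebra

section Localization

variable {E : ι → Type*} [∀ i, AddCommGroup (E i)] [∀ i, Module ℂ (E i)] {r m n : ℕ}
  {Qh : ∀ i, (Fin r → E i) →ₗ[ℂ] (Fin m → E i)} {Ph : ∀ i, (Fin m → E i) →ₗ[ℂ] (Fin n → E i)}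
  {V : Submodule ℂ (∀ i, E i)}

/-- Almost `V` global hypoellipticity of the componentwise operator `Q` with components `Qh i`:
every `u ∈ Π^r` with `Q u ∈ V^m` lies in `V^r + ker Q`. -/
def AlmostGloballyHypoelliptic (Qh : ∀ i, (Fin r → E i) →ₗ[ℂ] (Fin m → E i))
    (V : Submodule ℂ (∀ i, E i)) : Prop :=
  ∀ u : ∀ i, Fin r → E i, pwMap Qh u ∈ Vpow V m →
    ∃ v : ∀ i, Fin r → E i, (∀ i, Qh i (v i) = 0) ∧ u - v ∈ Vpow V r

theorem almostGloballyHypoelliptic_finSupp : AlmostGloballyHypoelliptic Qh (finSupp E) := by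
  classical
  intro u hu
  refine ⟨fun i => if Qh i (u i) = 0 then u i else 0, fun i => ?_, fun j => ?_⟩
  · by_cases hi : Qh i (u i) = 0 <;> simp [hi]
  · have hfin : (⋃ k : Fin m, {i | pwMap Qh u i k ≠ 0}).Finite := Set.finite_iUnion hu
    refine hfin.subset fun i hi => ?_
    by_contra hzero
    simp only [Set.mem_iUnion, Set.mem_ofPred_eq, not_exists, not_not, pwMap_apply] at hzero
    have hQu : Qh i (u i) = 0 := funext hzero
    exact hi (by simp [hQu])

variable (Qh Ph V)

/-- The localization map `H(V) → ∏ i, ker P̂ i / ran Q̂ i`, sending the class of `a` to the family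
of the classes of its components `a i`. -/
def cohLoc : coh Qh Ph V →ₗ[ℂ] ∀ i, locCoh Qh Ph i :=
  Submodule.liftQ ((cohRan Qh V).comap (cohKer Ph V).subtype)
    (LinearMap.pi fun i =>
      (Submodule.mkQ ((LinearMap.range (Qh i)).comap (LinearMap.ker (Ph i)).subtype)).comp
        (LinearMap.codRestrict (LinearMap.ker (Ph i))
          ((LinearMap.proj i).comp (cohKer Ph V).subtype) fun a => kerMem Ph a i))
    (by
      intro a ha
      obtain ⟨w, -, hw⟩ := Submodule.mem_comap.mp ha
      rw [LinearMap.mem_ker]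
      funext i
      exact (Submodule.Quotient.mk_eq_zero _).mpr ⟨w i, congrFun hw i⟩)

theorem cohLoc_mk_apply (a : cohKer Ph V) (i : ι) :
    cohLoc Qh Ph V (Submodule.Quotient.mk a) i = Submodule.Quotient.mk ⟨a.1 i, kerMem Ph a i⟩ :=
  rfl

variable {Qh Ph V}

theorem AlmostGloballyHypoelliptic.cohLoc_injective (hQ : AlmostGloballyHypoelliptic Qh V) :
    Function.Injective (cohLoc Qh Ph V) := by
  rw [injective_iff_map_eq_zero]
  intro x hx
  obtain ⟨a, rfl⟩ := Submodule.Quotient.mk_surjective _ x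
  have hexact : ∀ i, ∃ u, Qh i u = a.1 i := fun i =>
    (Submodule.Quotient.mk_eq_zero _).mp ((cohLoc_mk_apply Qh Ph V a i).symm.trans (congrFun hx i))
  choose u hu using hexact
  have hQu : pwMap Qh u = a.1 := funext hu
  obtain ⟨v, hv, huv⟩ := hQ u (hQu ▸ a.2.1)
  have hQuv : pwMap Qh (u - v) = a.1 := funext fun i => by simp [hv, hu]
  exact (Submodule.Quotient.mk_eq_zero _).mpr ⟨u - v, huv, hQuv⟩

theorem finSupp_le_range_cohLoc (hV : finSupp E ≤ V) :
    finSupp (locCoh Qh Ph) ≤ LinearMap.range (cohLoc Qh Ph V) := by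
  intro c hc
  have hlift : ∀ i, ∃ a : LinearMap.ker (Ph i),
      (Submodule.Quotient.mk a : locCoh Qh Ph i) = c i ∧ (c i = 0 → a = 0) := fun i => by
    by_cases hi : c i = 0
    · exact ⟨0, hi ▸ Submodule.Quotient.mk_zero _, fun _ => rfl⟩
    · obtain ⟨a, ha⟩ := Submodule.Quotient.mk_surjective _ (c i)
      exact ⟨a, ha, fun h => absurd h hi⟩
  choose a ha ha0 using hlift
  have hmem : (fun i => (a i : Fin m → E i)) ∈ cohKer Ph V := by
    refine ⟨fun j => hV ?_, LinearMap.mem_ker.mpr (funext fun i => (a i).2)⟩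
    exact Set.Finite.subset hc fun i hi hci => hi (by simp [ha0 i hci])
  exact ⟨Submodule.Quotient.mk ⟨_, hmem⟩, funext ha⟩

theorem finite_pi_locCoh (hV : finSupp E ≤ V) [Module.Finite ℂ (coh Qh Ph V)] :
    Module.Finite ℂ (∀ i, locCoh Qh Ph i) :=
  finite_pi_of_finSupp_le_range (L := locCoh Qh Ph) (f := cohLoc Qh Ph V)
    (finSupp_le_range_cohLoc hV)

theorem AlmostGloballyHypoelliptic.finite_coh_iff (hQ : AlmostGloballyHypoelliptic Qh V)
    (hV : finSupp E ≤ V) :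
    Module.Finite ℂ (coh Qh Ph V) ↔ Module.Finite ℂ (∀ i, locCoh Qh Ph i) :=
  finite_iff_finite_pi_of_finSupp_le_range hQ.cohLoc_injective (finSupp_le_range_cohLoc hV)

theorem AlmostGloballyHypoelliptic.finrank_coh (hQ : AlmostGloballyHypoelliptic Qh V)
    (hV : finSupp E ≤ V) [Module.Finite ℂ (coh Qh Ph V)] :
    Module.finrank ℂ (coh Qh Ph V) = ∑ᶠ i, Module.finrank ℂ (locCoh Qh Ph i) :=
  finrank_eq_finsum_of_finSupp_le_range hQ.cohLoc_injective (finSupp_le_range_cohLoc hV)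

end Localization

section Summable

variable {f : ι → ℝ}

theorem exists_finset_disjoint_one_lt_sum_of_not_summable (hf : 0 ≤ f) (hsum : ¬ Summable f)
    (s : Finset ι) : ∃ t : Finset ι, 1 < ∑ i ∈ t, f i ∧ Disjoint s t := by
  classical
  by_contra! hle
  refine hsum (summable_of_sum_le (c := ∑ i ∈ s, f i + 1) hf fun u => ?_)
  have hdiff : ∑ i ∈ u \ s, f i ≤ 1 :=
    not_lt.mp fun h => hle _ h Finset.disjoint_sdiff
  have hinter : ∑ i ∈ u ∩ s, f i ≤ ∑ i ∈ s, f i :=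
    Finset.sum_le_sum_of_subset_of_nonneg Finset.inter_subset_right fun i _ _ => hf i
  exact (Finset.sum_inter_add_sum_sdiff u s f).symm.trans_le (add_le_add hinter hdiff)

theorem not_summable_of_pairwise_disjoint_of_one_lt_sum (hf : 0 ≤ f) {t : ℕ → Finset ι}
    (hdisj : Pairwise (Function.onFun Disjoint t)) (ht : ∀ k, 1 < ∑ i ∈ t k, f i) :
    ¬ Summable f := by
  classical
  intro hsum
  obtain ⟨N, hN⟩ := exists_nat_gt (∑' i, f i)
  have hlower : (N : ℝ) ≤ ∑' i, f i :=
    calc (N : ℝ) = ∑ k ∈ Finset.range N, 1 := by simp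
      _ ≤ ∑ k ∈ Finset.range N, ∑ i ∈ t k, f i := Finset.sum_le_sum fun k _ => (ht k).le
      _ = ∑ i ∈ (Finset.range N).biUnion t, f i :=
          (Finset.sum_biUnion (hdisj.set_pairwise _)).symm
      _ ≤ ∑' i, f i := hsum.sum_le_tsum _ fun i _ => hf i
  exact hlower.not_gt hN

theorem exists_pairwise_disjoint_not_summable_indicator (hf : 0 ≤ f) (hsum : ¬ Summable f) :
    ∃ A : ℕ → Set ι, Pairwise (Function.onFun Disjoint A) ∧
      ∀ j, ¬ Summable ((A j).indicator f) := by
  classical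
  obtain ⟨t, ht, hdisj⟩ := exists_seq_of_forall_finset_exists'
    (fun t : Finset ι => 1 < ∑ i ∈ t, f i) Disjoint fun S _ => by
      obtain ⟨t, ht, hdisj⟩ :=
        exists_finset_disjoint_one_lt_sum_of_not_summable hf hsum (S.biUnion id)
      exact ⟨t, ht, (Finset.disjoint_biUnion_left _ _ _).mp hdisj⟩
  refine ⟨fun j => ⋃ l, t (Nat.pair j l), fun j k hjk => ?_, fun j => ?_⟩
  · simp only [Function.onFun, Set.disjoint_iUnion_left, Set.disjoint_iUnion_right,
      Finset.disjoint_coe]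
    exact fun l l' => hdisj fun h => hjk (Nat.pair_eq_pair.mp h).1
  · have hindep : Pairwise (Function.onFun Disjoint fun l => t (Nat.pair j l)) :=
      fun l l' hl => hdisj fun h => hl (Nat.pair_eq_pair.mp h).2
    refine not_summable_of_pairwise_disjoint_of_one_lt_sum
      (Set.indicator_nonneg fun i _ => hf i) hindep fun l => ?_
    rw [Finset.sum_congr rfl fun i hi => Set.indicator_of_mem (Set.mem_iUnion.mpr ⟨l, hi⟩) f]
    exact ht _

end Summable

section WeightedFamilies

theorem exists_apply_eq_norm_le_add {K F G : Type*} [Ring K] [SeminormedAddCommGroup F]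
    [Module K F] [NormedAddCommGroup G] [Module K G] (T : F →ₗ[K] G) (u : F) :
    ∃ w, T w = T u ∧ ∀ w', T w' = T u → ‖w‖ ≤ ‖w'‖ + ‖T u‖ := by
  by_cases hu : T u = 0
  · exact ⟨0, by simp [hu], fun w' _ => by simpa using add_nonneg (norm_nonneg w') (norm_nonneg _)⟩
  · let S : Set ℝ := norm '' {w | T w = T u}
    have hS : S.Nonempty := ⟨‖u‖, u, rfl, rfl⟩
    obtain ⟨_, ⟨w, hw, rfl⟩, hlt⟩ := Real.lt_sInf_add_pos hS (norm_pos_iff.mpr hu)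
    have hbdd : BddBelow S := ⟨0, by rintro _ ⟨w', -, rfl⟩; exact norm_nonneg w'⟩
    exact ⟨w, hw, fun w' hw' => hlt.le.trans (by gcongr; exact csInf_le hbdd ⟨w', hw', rfl⟩)⟩

variable {E : ι → Type*} [∀ i, NormedAddCommGroup (E i)] [∀ i, InnerProductSpace ℂ (E i)]
  {ω : ι → ℝ} {k l r m n : ℕ}

theorem finSupp_le_DprojSub : finSupp E ≤ DprojSub E ω := fun _ ha _ _ =>
  summable_of_hasFiniteSupport <| Set.Finite.subset ha fun i hi h0 => hi (by simp [h0])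

theorem mem_Vpow_DprojSub_iff {x : ∀ i, Fin k → E i} :
    x ∈ Vpow (DprojSub E ω) k ↔
      ∀ t > (0 : ℝ), Summable fun i => Real.exp (2 * t * ω i) * ‖x i‖ ^ 2 := by
  refine ⟨fun hx t ht => ?_, fun hx j t ht => ?_⟩
  · refine .of_nonneg_of_le (fun i => by positivity) (fun i => ?_)
      (summable_sum fun j (_ : j ∈ Finset.univ) => hx j t ht)
    have hnorm : ‖x i‖ ^ 2 ≤ ∑ j, ‖x i j‖ ^ 2 := by
      have hle : ‖x i‖ ≤ √(∑ j, ‖x i j‖ ^ 2) :=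
        (pi_norm_le_iff_of_nonneg (Real.sqrt_nonneg _)).mpr fun j => Real.le_sqrt_of_sq_le <|
          Finset.single_le_sum (f := fun j => ‖x i j‖ ^ 2) (fun j _ => sq_nonneg _)
            (Finset.mem_univ j)
      exact (Real.le_sqrt (norm_nonneg _) (by positivity)).mp hle
    rw [← Finset.mul_sum]
    gcongr
  · refine .of_nonneg_of_le (fun i => by positivity) (fun i => ?_) (hx t ht)
    gcongr
    exact norm_le_pi_norm _ _

theorem mem_Vpow_DprojSub_of_norm_le_add {x : ∀ i, Fin k → E i} {y : ∀ i, Fin l → E i}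
    {z : ∀ i, Fin m → E i} (hy : y ∈ Vpow (DprojSub E ω) l) (hz : z ∈ Vpow (DprojSub E ω) m)
    (hle : ∀ i, ‖x i‖ ≤ ‖y i‖ + ‖z i‖) : x ∈ Vpow (DprojSub E ω) k := by
  rw [mem_Vpow_DprojSub_iff] at *
  intro t ht
  refine .of_nonneg_of_le (fun i => by positivity) (fun i => ?_)
    (((hy t ht).add (hz t ht)).mul_left 2)
  calc Real.exp (2 * t * ω i) * ‖x i‖ ^ 2
      ≤ Real.exp (2 * t * ω i) * (2 * (‖y i‖ ^ 2 + ‖z i‖ ^ 2)) := by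
        gcongr
        exact (pow_le_pow_left₀ (norm_nonneg _) (hle i) 2).trans add_sq_le
    _ = 2 * (Real.exp (2 * t * ω i) * ‖y i‖ ^ 2 + Real.exp (2 * t * ω i) * ‖z i‖ ^ 2) := by ring

open scoped Classical in
theorem piecewise_zero_mem_Vpow_DprojSub {x : ∀ i, Fin k → E i}
    (hx : x ∈ Vpow (DprojSub E ω) k) (A : Set ι) :
    A.piecewise x 0 ∈ Vpow (DprojSub E ω) k := by
  refine mem_Vpow_DprojSub_of_norm_le_add hx (zero_mem (Vpow (DprojSub E ω) k)) fun i => ?_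
  by_cases hi : i ∈ A <;> simp [hi]

open scoped Classical in
theorem exists_pairwise_disjoint_piecewise_zero_notMem {x : ∀ i, Fin k → E i}
    (hx : x ∉ Vpow (DprojSub E ω) k) :
    ∃ A : ℕ → Set ι, Pairwise (Function.onFun Disjoint A) ∧
      ∀ j, (A j).piecewise x 0 ∉ Vpow (DprojSub E ω) k := by
  simp only [mem_Vpow_DprojSub_iff, not_forall] at hx ⊢
  obtain ⟨t, ht, hsum⟩ := hx
  obtain ⟨A, hdisj, hA⟩ :=
    exists_pairwise_disjoint_not_summable_indicator (fun i => by positivity) hsum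
  refine ⟨A, hdisj, fun j => ⟨t, ht, fun h => hA j (h.congr fun i => ?_)⟩⟩
  by_cases hi : i ∈ A j <;> simp [hi]

open scoped Classical in
theorem sum_smul_piecewise_zero_apply {K κ : Type*} [Semiring K] {F : ι → Type*}
    [∀ i, AddCommMonoid (F i)] [∀ i, Module K (F i)] {A : κ → Set ι}
    (hA : Pairwise (Function.onFun Disjoint A)) (s : Finset κ) (g : κ → K) (z : ∀ i, F i) {j : κ}
    (hj : j ∈ s) {i : ι} (hi : i ∈ A j) :
    (∑ j ∈ s, g j • (A j).piecewise z 0) i = g j • z i := by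
  rw [Finset.sum_apply, Finset.sum_eq_single_of_mem j hj fun k _ hk => ?_]
  · simp [hi]
  · simp [(hA hk).notMem_of_mem_right hi]

variable {Qh : ∀ i, (Fin r → E i) →ₗ[ℂ] (Fin m → E i)}
  {Ph : ∀ i, (Fin m → E i) →ₗ[ℂ] (Fin n → E i)}

theorem almostGloballyHypoelliptic_of_finite_coh (hPQ : ∀ i, (Ph i).comp (Qh i) = 0)
    [Module.Finite ℂ (coh Qh Ph (DprojSub E ω))] :
    AlmostGloballyHypoelliptic Qh (DprojSub E ω) := by
  classical
  intro u hu
  choose w hw hmin using fun i => exists_apply_eq_norm_le_add (Qh i) (u i)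
  refine ⟨u - w, fun i => by simp [hw], ?_⟩
  rw [sub_sub_cancel]
  by_contra hmem
  obtain ⟨A, hdisj, hA⟩ := exists_pairwise_disjoint_piecewise_zero_notMem hmem
  have hcut : ∀ j, (A j).piecewise (pwMap Qh u) 0 ∈ cohKer Ph (DprojSub E ω) := fun j => by
    refine ⟨piecewise_zero_mem_Vpow_DprojSub hu _, LinearMap.mem_ker.mpr (funext fun i => ?_)⟩
    by_cases hi : i ∈ A j
    · simpa [hi] using LinearMap.congr_fun (hPQ i) (u i)
    · simp [hi]
  obtain ⟨s, g, ⟨y, hy, hQy⟩, j, hj, hgj⟩ :=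
    exists_sum_smul_mem_of_finite_quotient (q := cohRan Qh (DprojSub E ω)) hcut
  have hQy_apply : ∀ i ∈ A j, Qh i (y i) = g j • Qh i (u i) := fun i hi =>
    (congrFun hQy i).trans (sum_smul_piecewise_zero_apply hdisj s g _ hj hi)
  refine hA j (mem_Vpow_DprojSub_of_norm_le_add (Submodule.smul_mem _ (g j)⁻¹ hy) hu fun i => ?_)
  by_cases hi : i ∈ A j
  · simpa [hi] using hmin i ((g j)⁻¹ • y i) (by rw [map_smul, hQy_apply i hi, inv_smul_smul₀ hgj])
  · simpa [hi] using add_nonneg (norm_nonneg _) (norm_nonneg _)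

end WeightedFamilies

theorem statement_18_general {ι : Type*} (E : ι → Type*)
    [∀ i, NormedAddCommGroup (E i)] [∀ i, InnerProductSpace ℂ (E i)] (r m n : ℕ)
    (Qh : ∀ i, (Fin r → E i) →ₗ[ℂ] (Fin m → E i))
    (Ph : ∀ i, (Fin m → E i) →ₗ[ℂ] (Fin n → E i))
    (hPQ : ∀ i, (Ph i).comp (Qh i) = 0) (ω : ι → ℝ) :
    (FiniteDimensional ℂ (coh Qh Ph (DprojSub E ω)) ↔
      FiniteDimensional ℂ (coh Qh Ph (finSupp E)) ∧
        AlmostGloballyHypoelliptic Qh (DprojSub E ω)) ∧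
    (FiniteDimensional ℂ (coh Qh Ph (DprojSub E ω)) →
      Module.finrank ℂ (coh Qh Ph (DprojSub E ω)) =
        ∑ᶠ i, Module.finrank ℂ (locCoh Qh Ph i)) := by
  have hfinSupp : FiniteDimensional ℂ (coh Qh Ph (finSupp E)) ↔
      Module.Finite ℂ (∀ i, locCoh Qh Ph i) :=
    almostGloballyHypoelliptic_finSupp.finite_coh_iff le_rfl
  have hD : finSupp E ≤ DprojSub E ω := finSupp_le_DprojSub
  have hAGH (_ : FiniteDimensional ℂ (coh Qh Ph (DprojSub E ω))) :
      AlmostGloballyHypoelliptic Qh (DprojSub E ω) := almostGloballyHypoelliptic_of_finite_coh hPQ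
  exact ⟨⟨fun h => ⟨hfinSupp.mpr (finite_pi_locCoh hD), hAGH h⟩,
    fun ⟨hfin, hQ⟩ => (hQ.finite_coh_iff hD).mpr (hfinSupp.mp hfin)⟩,
    fun h => (hAGH h).finrank_coh hD⟩

theorem statement_18 {ι : Type*} [Countable ι] (E : ι → Type*)
    [∀ i, NormedAddCommGroup (E i)] [∀ i, InnerProductSpace ℂ (E i)]
    [∀ i, FiniteDimensional ℂ (E i)] (r m n : ℕ)
    (Qh : ∀ i, (Fin r → E i) →ₗ[ℂ] (Fin m → E i))
    (Ph : ∀ i, (Fin m → E i) →ₗ[ℂ] (Fin n → E i))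
    (hPQ : ∀ i, (Ph i).comp (Qh i) = 0)
    (ω : ι → ℝ) (hω : ∀ i, 0 ≤ ω i)
    (ρ : ℝ) (hρ : 0 < ρ) (hS : Summable fun i => Real.exp (-ρ * ω i))
    (hQ : (Vpow (DprojSub E ω) r).map (pwMap Qh) ≤ Vpow (DprojSub E ω) m)
    (hP : (Vpow (DprojSub E ω) m).map (pwMap Ph) ≤ Vpow (DprojSub E ω) n) :
    (FiniteDimensional ℂ (coh Qh Ph (DprojSub E ω)) ↔
      FiniteDimensional ℂ (coh Qh Ph (finSupp E)) ∧
        ∀ u : ∀ i, Fin r → E i, pwMap Qh u ∈ Vpow (DprojSub E ω) m →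
          ∃ v : ∀ i, Fin r → E i, (∀ i, Qh i (v i) = 0) ∧
            u - v ∈ Vpow (DprojSub E ω) r) ∧
    (FiniteDimensional ℂ (coh Qh Ph (DprojSub E ω)) →
      Module.finrank ℂ (coh Qh Ph (DprojSub E ω)) =
        ∑ᶠ i, Module.finrank ℂ (locCoh Qh Ph i)) :=
  statement_18_general E r m n Qh Ph hPQ ω
end
end
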